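/- Let M_1, …, M_k be matroids on the same finite ground set E with common independent sets 𝓘, let w : E → ℝ≥0, let p ∈ (0,1], and let τ be a positive integer. For every subset S ⊆ E fix OPTSOL(S) ∈ 𝓘 with OPTSOL(S) ⊆ S maximizing w(OPTSOL(S)). Let R, R_1, …, R_τ be independent random subsets of E, each containing every element independently with probability p, let Q_i = OPTSOL(R_i) and Q = Q_1 ∪ … ∪ Q_τ. Then there exists a random set I* (a deterministic function of (R_1,…,R_τ,R)) such that I* ⊆ Q ∩ R and I* ∈ 𝓘 with probability 1, and for every element e ∈ E and every i ∈ {1,…,τ} with Pr[e ∈ Q_i \ (Q_1 ∪ … ∪ Q_{i−1})] > 0: Pr[ e ∈ I* | e ∈ Q_i \ (Q_1 ∪ … ∪ Q_{i−1}) ] ≥ p · (1−p)^{k(i−1)}. -/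

import Mathlib

open Finset

noncomputable section

variable {E : Type*} [Fintype E] [DecidableEq E]

/-- Probability that an independent-inclusion random subset of `E`, in which each element `e`
is included independently with probability `π e`, is exactly the set `A`. -/
def prodWeight (π : E → ℝ) (A : Finset E) : ℝ :=
  (∏ e ∈ A, π e) * ∏ e ∈ Aᶜ, (1 - π e)

/-- Expectation of `g` under the independent-inclusion random subset with marginals `π`. -/
def expec (π : E → ℝ) (g : Finset E → ℝ) : ℝ :=
  ∑ A : Finset E, prodWeight π A * g A

/-- Total (additive) weight of a finite set. -/
def setWeight (w : E → ℝ) (T : Finset E) : ℝ := ∑ e ∈ T, w e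

/-- Value of a best feasible (w.r.t. `𝓘`) subset of `S`, for the objective `f`. -/
def bestVal (𝓘 : Set (Finset E)) (f : Finset E → ℝ) (S : Finset E) : ℝ :=
  sSup (f '' {T | T ⊆ S ∧ T ∈ 𝓘})

/-- A (finite) matroid on the ground set `E`, given by its independent sets. -/
structure FinMatroid (E : Type*) [Fintype E] [DecidableEq E] where
  Indep : Finset E → Prop
  empty_indep : Indep ∅
  indep_subset : ∀ ⦃S T : Finset E⦄, Indep T → S ⊆ T → Indep S
  indep_exchange : ∀ ⦃S T : Finset E⦄, Indep S → Indep T → S.card < T.card →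
    ∃ e ∈ T, e ∉ S ∧ Indep (insert e S)

/-- The rank function of a matroid: the maximum cardinality of an independent subset of `S`. -/
def FinMatroid.rank (M : FinMatroid E) (S : Finset E) : ℕ :=
  sSup {n | ∃ T ⊆ S, M.Indep T ∧ T.card = n}

/-- `I_1 ∪ ⋯ ∪ I_j` (sets are indexed starting from `1`). -/
def prefixUnion (I : ℕ → Finset E) (j : ℕ) : Finset E :=
  (Finset.Icc 1 j).biUnion I

/-- A nested system of spanning sets for the set system on ground set `G` with rank
function `rk`: each `I_j` lies outside `I_{1:j-1}` and is spanning (full rank) in the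
deletion minor obtained by removing `I_{1:j-1}` from `G`. -/
def IsNSS (rk : Finset E → ℕ) (G : Finset E) (τ : ℕ) (I : ℕ → Finset E) : Prop :=
  ∀ j ∈ Finset.Icc 1 τ,
    I j ⊆ G \ prefixUnion I (j - 1) ∧ rk (I j) = rk (G \ prefixUnion I (j - 1))

/-- `I` is a maximum-`w`-weight independent set of the restriction of `M` to `G`. -/
def IsMaxWeightIndep (M : FinMatroid E) (w : E → ℝ) (G : Finset E) (I : Finset E) : Prop :=
  I ⊆ G ∧ M.Indep I ∧ ∀ J ⊆ G, M.Indep J → setWeight w J ≤ setWeight w I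

/-- `I` is a maximum-`w`-weight base of the restriction (deletion minor) of `M` to `G`. -/
def IsMaxWeightBase (M : FinMatroid E) (w : E → ℝ) (G : Finset E) (I : Finset E) : Prop :=
  I ⊆ G ∧ M.Indep I ∧ M.rank I = M.rank G ∧
    ∀ J ⊆ G, M.Indep J → M.rank J = M.rank G → setWeight w J ≤ setWeight w I

/-!
The layers `P i = Q i \ (Q 1 ∪ ⋯ ∪ Q (i - 1))` are disjoint and independent in every matroid,
and they are treated in order. All of `R ∩ P 1` is selected, the coins of `P 1` being exposed
one at a time. By matroid exchange, when the coin of `a` is exposed, each matroid contributes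
at most one element `b` of a given later layer `U` such that `a` can replace `b` in `U`, while
`b` can replace `a` in what is left of `P 1`. On heads `b` is evicted from `U` and `a` is
contracted; on tails `b` is contracted, so that it is never threatened again by `P 1`. Hence an
element of a later layer is threatened at most once per matroid and survives `P 1` with
probability at least `(1 - p) ^ k`. Contracting `R ∩ P 1`, one continues with the surviving
parts of the remaining layers, whose coins are still fresh; an element of layer `i` thus
survives with probability at least `(1 - p) ^ (k * (i - 1))` and is then selected if its own
coin, independent of its survival, shows heads.
-/

section RandomSubset

variable {α : Type*} [DecidableEq α] {π : α → ℝ} {G H : Finset α} {S S' : Finset α → Prop} {a : α}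

open scoped Classical in
/-- Probability that the random subset of `G` containing each `e ∈ G` independently with
probability `π e` satisfies `S`; the localisation of `prodWeight` to the coins of `G`. -/
def subsetProb (π : α → ℝ) (G : Finset α) (S : Finset α → Prop) : ℝ :=
  ∑ A ∈ G.powerset, ((∏ e ∈ A, π e) * ∏ e ∈ G \ A, (1 - π e)) * if S A then 1 else 0

open scoped Classical in
theorem subsetProb_empty (π : α → ℝ) (S : Finset α → Prop) :
    subsetProb π ∅ S = if S ∅ then 1 else 0 := by
  simp [subsetProb]

theorem subsetProb_insert (π : α → ℝ) (S : Finset α → Prop) (ha : a ∉ G) :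
    subsetProb π (insert a G) S =
      π a * subsetProb π G (fun A => S (insert a A)) + (1 - π a) * subsetProb π G S := by
  simp only [subsetProb]
  rw [sum_powerset_insert ha, add_comm, mul_sum, mul_sum]
  congr 1 <;> refine sum_congr rfl fun A hA => ?_
  · have haA : a ∉ A := fun h => ha (mem_powerset.1 hA h)
    rw [prod_insert haA, insert_sdiff_insert, sdiff_insert_of_notMem ha]
    ring
  · have haA : a ∉ A := fun h => ha (mem_powerset.1 hA h)
    rw [insert_sdiff_of_notMem _ haA, prod_insert (fun h => ha (mem_sdiff.1 h).1)]
    ring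

theorem subsetProb_true (π : α → ℝ) (G : Finset α) : subsetProb π G (fun _ => True) = 1 := by
  simp [subsetProb, ← prod_add]

theorem subsetProb_false (π : α → ℝ) (G : Finset α) : subsetProb π G (fun _ => False) = 0 := by
  simp [subsetProb]

theorem subsetProb_congr (h : ∀ A ⊆ G, (S A ↔ S' A)) : subsetProb π G S = subsetProb π G S' := by
  unfold subsetProb
  exact sum_congr rfl fun A hA => by congr 2; exact propext (h A (mem_powerset.1 hA))

theorem subsetProb_mem (π : α → ℝ) (ha : a ∈ G) : subsetProb π G (fun A => a ∈ A) = π a := by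
  have hcongr : subsetProb π (G.erase a) (fun A => a ∈ A) = 0 :=
    (subsetProb_congr fun A hA => iff_false_intro fun h => notMem_erase a G (hA h)).trans
      (subsetProb_false π _)
  rw [← insert_erase ha, subsetProb_insert π _ (notMem_erase a G), hcongr]
  simp [subsetProb_true]

theorem subsetProb_mono (h0 : ∀ e, 0 ≤ π e) (h1 : ∀ e, π e ≤ 1) (h : ∀ A ⊆ G, S A → S' A) :
    subsetProb π G S ≤ subsetProb π G S' := by
  refine sum_le_sum fun A hA => mul_le_mul_of_nonneg_left ?_ ?_
  · have := h A (mem_powerset.1 hA)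
    split_ifs <;> simp_all
  · exact mul_nonneg (prod_nonneg fun e _ => h0 e) (prod_nonneg fun e _ => sub_nonneg.2 (h1 e))

theorem subsetProb_nonneg (h0 : ∀ e, 0 ≤ π e) (h1 : ∀ e, π e ≤ 1) : 0 ≤ subsetProb π G S :=
  (subsetProb_false π G).symm.le.trans (subsetProb_mono h0 h1 fun _ _ => False.elim)

theorem subsetProb_mul_le_subsetProb_union (h0 : ∀ e, 0 ≤ π e) (h1 : ∀ e, π e ≤ 1)
    (hGH : Disjoint G H) {c : ℝ}
    (h : ∀ A ⊆ G, S A → c ≤ subsetProb π H fun B => S' (A ∪ B)) :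
    subsetProb π G S * c ≤ subsetProb π (G ∪ H) S' := by
  induction G using Finset.induction_on generalizing S S' with
  | empty =>
    rw [subsetProb_empty, empty_union]
    split_ifs with hS
    · simpa using h ∅ (empty_subset _) hS
    · simpa using subsetProb_nonneg h0 h1
  | insert a G ha ih =>
    obtain ⟨haH, hGH⟩ := disjoint_insert_left.1 hGH
    rw [insert_union, subsetProb_insert π _ ha,
      subsetProb_insert π _ (by simp only [mem_union, ha, haH, or_self, not_false_eq_true]),
      add_mul, mul_assoc, mul_assoc]
    refine add_le_add (mul_le_mul_of_nonneg_left (ih hGH fun A hA hS => ?_) (h0 a))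
      (mul_le_mul_of_nonneg_left (ih hGH fun A hA hS => ?_) (sub_nonneg.2 (h1 a)))
    · simpa only [insert_union] using h (insert a A) (insert_subset_insert a hA) hS
    · exact h A (hA.trans (subset_insert a G)) hS

theorem prodWeight_nonneg [Fintype α] (h0 : ∀ e, 0 ≤ π e) (h1 : ∀ e, π e ≤ 1) (A : Finset α) :
    0 ≤ prodWeight π A :=
  mul_nonneg (prod_nonneg fun e _ => h0 e) (prod_nonneg fun e _ => sub_nonneg.2 (h1 e))

theorem subsetProb_univ [Fintype α] (π : α → ℝ) (S : Finset α → Prop) [DecidablePred S] :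
    subsetProb π univ S = ∑ A, prodWeight π A * if S A then 1 else 0 := by
  simp only [subsetProb, prodWeight, powerset_univ, compl_eq_univ_sdiff]
  exact sum_congr rfl fun A _ => by congr

end RandomSubset

section Eviction

open scoped Matroid

variable {α ι : Type*} {M : ι → Matroid α} {a : α}

theorem exists_exchange_of_mem_closure {N : Matroid α} {U P : Set α} (hU : N.Indep U)
    (haU : a ∉ U) (hcl : a ∈ N.closure U) (haP : a ∉ P) (hP : N.Indep (insert a P)) :
    ∃ b ∈ U, N.Indep (insert a (U \ {b})) ∧ b ∉ P ∧ N.Indep (insert b P) := by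
  have hPind : N.Indep P := hP.subset (Set.subset_insert a P)
  obtain ⟨b, ⟨hbC, hba⟩, hbP⟩ : ∃ b ∈ N.fundCircuit a U \ {a}, b ∉ N.closure P := by
    by_contra! hspan
    have haC := (hU.fundCircuit_isCircuit hcl haU).mem_closure_sdiff_singleton_of_mem
      (N.mem_fundCircuit a U)
    exact (hPind.notMem_closure_iff_of_notMem haP).2 hP
      (N.closure_subset_closure_of_subset_closure hspan haC)
  have hbU : b ∈ U := (N.fundCircuit_subset_insert a U hbC).resolve_left hba
  obtain ⟨hins, hbP⟩ := (hPind.notMem_closure_iff (hU.subset_ground hbU)).1 hbP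
  refine ⟨b, hbU, ?_, hbP, hins⟩
  rw [Set.insert_sdiff_singleton_comm (Ne.symm hba)]
  exact (hU.mem_fundCircuit_iff hcl haU).1 hbC

theorem exists_subset_contract_indep {N : Matroid α} {U P : Set α} (hU : N.Indep U)
    (haP : a ∉ P) (hP : N.Indep (insert a P)) :
    ∃ B ⊆ U, (N ／ {a}).Indep (U \ B) ∧ (N ／ B).Indep P := by
  have ha : N.Indep {a} := hP.subset (by simp)
  by_cases haU : a ∈ U
  · refine ⟨{a}, by simpa using haU, hU.diff_indep_contract_of_subset (by simpa using haU), ?_⟩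
    exact ha.contract_indep_iff.2 ⟨by simpa using haP, by simpa using hP⟩
  by_cases hcl : a ∈ N.closure U
  · obtain ⟨b, hbU, hU', hbP, hP'⟩ := exists_exchange_of_mem_closure hU haU hcl haP hP
    refine ⟨{b}, by simpa using hbU, ?_, ?_⟩
    · exact ha.contract_indep_iff.2 ⟨by simp [haU], by simpa using hU'⟩
    · exact (hU.subset (by simpa using hbU)).contract_indep_iff.2
        ⟨by simpa using hbP, by simpa using hP'⟩
  · have hins := (hU.notMem_closure_iff_of_notMem haU (hP.subset_ground (by simp))).1 hcl
    refine ⟨∅, Set.empty_subset U, ?_, by simpa using hP.subset (Set.subset_insert a P)⟩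
    exact ha.contract_indep_iff.2 ⟨by simpa using haU, by simpa using hins⟩

/-- A rule assigning to each realisation `T ⊆ P` a set `g T` of evicted elements, the same for all
the matroids, such that `T` can be added to what is left of each `U l`. -/
def IsEvictionRule (M : ι → Matroid α) (U : ι → Set α) (P : Finset α)
    (g : Finset α → Set α) : Prop :=
  ∀ T ⊆ P, ∀ l, (M l).Indep (U l \ g T ∪ T)

variable [DecidableEq α] {U B : ι → Set α} {P : Finset α} {g₀ g₁ : Finset α → Set α}

/-- The eviction rule that first exposes the coin of `a`: on heads it evicts the sets `B l` and
goes on with `g₁`, on tails it goes on with `g₀`. -/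
def evictBranch (a : α) (B : ι → Set α) (g₁ g₀ : Finset α → Set α) (T : Finset α) : Set α :=
  if a ∈ T then (⋃ l, B l) ∪ g₁ (T.erase a) else g₀ T

theorem isEvictionRule_evictBranch (ha : ∀ l, (M l).Indep {a}) (hB : ∀ l, (M l).Indep (B l))
    (h₁ : IsEvictionRule (fun l => M l ／ {a}) (fun l => U l \ B l) P g₁)
    (h₀ : IsEvictionRule (fun l => M l ／ B l) (fun l => U l \ B l) P g₀) :
    IsEvictionRule M U (insert a P) (evictBranch a B g₁ g₀) := by
  intro T hT l
  by_cases haT : a ∈ T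
  · have hind := ((ha l).contract_indep_iff.1 (h₁ (T.erase a) (subset_insert_iff.1 hT) l)).2
    refine hind.subset fun x hx => ?_
    simp only [evictBranch, haT, if_true, Set.mem_union, Set.mem_sdiff, Set.mem_iUnion,
      mem_coe, mem_erase, Set.mem_singleton_iff] at hx ⊢
    grind
  · have hind := ((hB l).contract_indep_iff.1
      (h₀ T ((subset_insert_iff_of_notMem haT).1 hT) l)).2
    refine hind.subset fun x hx => ?_
    simp only [evictBranch, haT, if_false, Set.mem_union, Set.mem_sdiff, mem_coe] at hx ⊢
    grind

theorem subsetProb_notMem_evictBranch (π : α → ℝ) (haP : a ∉ P) (e : α) :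
    subsetProb π (insert a P) (fun T => e ∉ evictBranch a B g₁ g₀ T) =
      π a * subsetProb π P (fun T => e ∉ (⋃ l, B l) ∪ g₁ T) +
        (1 - π a) * subsetProb π P (fun T => e ∉ g₀ T) := by
  rw [subsetProb_insert π _ haP]
  congr 2 <;> refine subsetProb_congr fun T hT => ?_
  · simp [evictBranch, erase_insert fun h => haP (hT h)]
  · simp [evictBranch, show a ∉ T from fun h => haP (hT h)]

variable [Finite ι] {π : α → ℝ} {q : ℝ}

theorem pow_ncard_le_subsetProb_notMem_evictBranch (h0 : ∀ e, 0 ≤ π e) (hq : ∀ e, π e ≤ q)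
    (hq1 : q ≤ 1) (haP : a ∉ P) (hBU : ∀ l, B l ⊆ U l) (e : α)
    (h₁ : (1 - q) ^ {l | e ∈ U l \ B l}.ncard ≤ subsetProb π P fun T => e ∉ g₁ T)
    (h₀ : (1 - q) ^ {l | e ∈ U l \ B l}.ncard ≤ subsetProb π P fun T => e ∉ g₀ T) :
    (1 - q) ^ {l | e ∈ U l}.ncard ≤
      subsetProb π (insert a P) fun T => e ∉ evictBranch a B g₁ g₀ T := by
  have h1 : ∀ e, π e ≤ 1 := fun e => (hq e).trans hq1
  have hq0 : 0 ≤ 1 - q := sub_nonneg.2 hq1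
  rw [subsetProb_notMem_evictBranch π haP]
  by_cases heB : ∃ l, e ∈ B l
  · obtain ⟨l, hl⟩ := heB
    have hlt : {l | e ∈ U l \ B l}.ncard < {l | e ∈ U l}.ncard :=
      Set.ncard_lt_ncard ((Set.ssubset_iff_of_subset fun l' hl' => hl'.1).2
        ⟨l, hBU l hl, fun hl' => hl'.2 hl⟩)
    calc (1 - q) ^ {l | e ∈ U l}.ncard
        ≤ (1 - q) ^ ({l | e ∈ U l \ B l}.ncard + 1) :=
          pow_le_pow_of_le_one hq0 (sub_le_self 1 ((h0 e).trans (hq e))) hlt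
      _ = (1 - q) * (1 - q) ^ {l | e ∈ U l \ B l}.ncard := pow_succ' _ _
      _ ≤ (1 - π a) * subsetProb π P (fun T => e ∉ g₀ T) :=
          mul_le_mul (sub_le_sub_left (hq a) 1) h₀ (pow_nonneg hq0 _) (sub_nonneg.2 (h1 a))
      _ ≤ _ := le_add_of_nonneg_left (mul_nonneg (h0 a) (subsetProb_nonneg h0 h1))
  · push Not at heB
    simp only [Set.mem_sdiff, heB, not_false_eq_true, and_true] at h₁ h₀
    simp only [Set.mem_union, Set.mem_iUnion, heB, exists_false, false_or]
    calc (1 - q) ^ {l | e ∈ U l}.ncard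
        = π a * (1 - q) ^ {l | e ∈ U l}.ncard + (1 - π a) * (1 - q) ^ {l | e ∈ U l}.ncard := by ring
      _ ≤ _ := add_le_add (mul_le_mul_of_nonneg_left h₁ (h0 a))
          (mul_le_mul_of_nonneg_left h₀ (sub_nonneg.2 (h1 a)))

theorem exists_isEvictionRule (h0 : ∀ e, 0 ≤ π e) (hq : ∀ e, π e ≤ q) (hq1 : q ≤ 1)
    (hU : ∀ l, (M l).Indep (U l)) (hP : ∀ l, (M l).Indep P) :
    ∃ g, IsEvictionRule M U P g ∧
      ∀ e, (1 - q) ^ {l | e ∈ U l}.ncard ≤ subsetProb π P fun T => e ∉ g T := by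
  induction P using Finset.induction_on generalizing M U with
  | empty =>
    refine ⟨fun _ => ∅, fun T hT l => ?_, fun e => ?_⟩
    · simpa [subset_empty.1 hT] using hU l
    · simpa [subsetProb_true] using
        pow_le_one₀ (sub_nonneg.2 hq1) (sub_le_self 1 ((h0 e).trans (hq e)))
  | insert a P haP ih =>
    simp only [coe_insert] at hP
    choose B hBU hUB hPB using fun l =>
      exists_subset_contract_indep (hU l) (mem_coe.not.2 haP) (hP l)
    have ha : ∀ l, (M l).Indep {a} := fun l => (hP l).subset (by simp)
    obtain ⟨g₁, hg₁, hprob₁⟩ := ih hUB fun l =>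
      (ha l).contract_indep_iff.2 ⟨by simpa using haP, by simpa using hP l⟩
    obtain ⟨g₀, hg₀, hprob₀⟩ := ih (fun l => (hU l).diff_indep_contract_of_subset (hBU l)) hPB
    exact ⟨evictBranch a B g₁ g₀,
      isEvictionRule_evictBranch ha (fun l => (hU l).subset (hBU l)) hg₁ hg₀,
      fun e => pow_ncard_le_subsetProb_notMem_evictBranch h0 hq hq1 haP hBU e
        (hprob₁ e) (hprob₀ e)⟩

end Eviction

section Selection

open scoped Matroid

variable {α ι : Type*} [DecidableEq α] {M : ι → Matroid α} {n : ℕ}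

/-- A rule choosing from each realisation `A` of the random set a common independent subset of the
union of the layers `P i`. -/
structure IsSelectionRule (M : ι → Matroid α) (P : Fin n → Finset α)
    (I : Finset α → Finset α) : Prop where
  subset_biUnion : ∀ A, I A ⊆ univ.biUnion P
  subset : ∀ A, I A ⊆ A
  indep : ∀ A l, (M l).Indep (I A)

/-- The selection rule that takes all of `A ∩ P₀` and continues on `A \ P₀` with the rule that `J`
prescribes for the outcome `A ∩ P₀`. -/
def selectFirst (P₀ : Finset α) (J : Finset α → Finset α → Finset α) (A : Finset α) : Finset α :=
  (A ∩ P₀) ∪ J (A ∩ P₀) (A \ P₀)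

theorem selectFirst_union {P₀ T T' : Finset α} (J : Finset α → Finset α → Finset α)
    (hT : T ⊆ P₀) (hT' : Disjoint T' P₀) : selectFirst P₀ J (T ∪ T') = T ∪ J T T' := by
  rw [selectFirst, union_inter_distrib_right, inter_eq_left.2 hT, disjoint_iff_inter_eq_empty.1 hT',
    union_empty, union_sdiff_distrib, sdiff_eq_empty_iff_subset.2 hT, empty_union,
    sdiff_eq_self_of_disjoint hT']

theorem isSelectionRule_selectFirst {P : Fin (n + 1) → Finset α}
    {P' : Finset α → Fin n → Finset α} {J : Finset α → Finset α → Finset α}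
    (hP : ∀ l, (M l).Indep (P 0)) (hP' : ∀ T i, P' T i ⊆ P i.succ)
    (hJ : ∀ T ⊆ P 0, IsSelectionRule (fun l => M l ／ T) (P' T) (J T)) :
    IsSelectionRule M P (selectFirst (P 0) J) where
  subset_biUnion A x hx := by
    obtain hx | hx := mem_union.1 hx
    · exact mem_biUnion.2 ⟨0, mem_univ _, (mem_inter.1 hx).2⟩
    · obtain ⟨i, -, hi⟩ := mem_biUnion.1 ((hJ _ inter_subset_right).subset_biUnion _ hx)
      exact mem_biUnion.2 ⟨i.succ, mem_univ _, hP' _ _ hi⟩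
  subset A := union_subset inter_subset_left
    (((hJ _ inter_subset_right).subset _).trans sdiff_subset)
  indep A l := by
    have hind : (M l).Indep (A ∩ P 0 : Finset α) :=
      (hP l).subset (coe_subset.2 inter_subset_right)
    rw [selectFirst, coe_union, Set.union_comm]
    exact (hind.contract_indep_iff.1 ((hJ _ inter_subset_right).indep _ l)).2

variable {π : α → ℝ} {q : ℝ} {G P₀ : Finset α} {J : Finset α → Finset α → Finset α} {e : α}

theorem le_subsetProb_mem_selectFirst (h0 : ∀ e, 0 ≤ π e) (h1 : ∀ e, π e ≤ 1)
    (heG : e ∈ G) (he : e ∈ P₀) : π e ≤ subsetProb π G fun A => e ∈ selectFirst P₀ J A :=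
  (subsetProb_mem π heG).symm.le.trans <| subsetProb_mono h0 h1 fun _ _ heA =>
    mem_union_left _ (mem_inter.2 ⟨heA, he⟩)

theorem mul_le_subsetProb_mem_selectFirst (h0 : ∀ e, 0 ≤ π e) (h1 : ∀ e, π e ≤ 1)
    (hP₀ : P₀ ⊆ G) {S : Finset α → Prop} {c : ℝ}
    (h : ∀ T ⊆ P₀, S T → c ≤ subsetProb π (G \ P₀) fun A => e ∈ J T A) :
    subsetProb π P₀ S * c ≤ subsetProb π G fun A => e ∈ selectFirst P₀ J A := by
  conv_rhs => rw [← union_sdiff_of_subset hP₀]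
  refine subsetProb_mul_le_subsetProb_union h0 h1 disjoint_sdiff fun T hT hS => ?_
  refine (h T hT hS).trans (subsetProb_mono h0 h1 fun A hA heA => ?_)
  rw [selectFirst_union J hT (sdiff_disjoint.mono_left hA)]
  exact mem_union_right _ heA

variable [Finite ι]

theorem exists_isSelectionRule (h0 : ∀ e, 0 ≤ π e) (hq : ∀ e, π e ≤ q) (hq1 : q ≤ 1)
    {P : Fin n → Finset α} (hPG : ∀ i, P i ⊆ G)
    (hdisj : Pairwise (Function.onFun Disjoint P)) (hP : ∀ l i, (M l).Indep (P i)) :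
    ∃ I, IsSelectionRule M P I ∧ ∀ i, ∀ e ∈ P i,
      π e * (1 - q) ^ (Nat.card ι * i) ≤ subsetProb π G fun A => e ∈ I A := by
  classical
  have h1 : ∀ e, π e ≤ 1 := fun e => (hq e).trans hq1
  have hq0 : 0 ≤ 1 - q := sub_nonneg.2 hq1
  induction n generalizing M G with
  | zero => exact ⟨fun _ => ∅, ⟨by simp, by simp, by simp⟩, fun i => i.elim0⟩
  | succ n ih =>
    have hdisj₀ : ∀ i : Fin n, Disjoint (P i.succ) (P 0) := fun i => hdisj (Fin.succ_ne_zero i)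
    choose g hg hprob using fun i : Fin n =>
      exists_isEvictionRule (π := π) h0 hq hq1 (fun l => hP l i.succ) (fun l => hP l 0)
    let P' (T : Finset α) (i : Fin n) : Finset α := {x ∈ P i.succ | x ∉ g i T}
    have hP' : ∀ T i, P' T i ⊆ P i.succ := fun T i => filter_subset _ _
    have hindep : ∀ T ⊆ P 0, ∀ l i, (M l ／ (T : Set α)).Indep (P' T i) := fun T hT l i => by
      rw [((hP l 0).subset (coe_subset.2 hT)).contract_indep_iff]
      refine ⟨disjoint_coe.2 ((hdisj₀ i).mono (hP' T i) hT), ?_⟩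
      have hcoe : (P' T i : Set α) = ↑(P i.succ) \ g i T := coe_filter _ _
      rw [hcoe]
      exact hg i T hT l
    choose! J hJ hJprob using fun T (hT : T ⊆ P 0) =>
      ih (G := G \ P 0) (P := P' T)
        (fun i => subset_sdiff.2 ⟨(hP' T i).trans (hPG _), (hdisj₀ i).mono_left (hP' T i)⟩)
        (fun i j hij => (hdisj ((Fin.succ_injective n).ne hij)).mono (hP' T i) (hP' T j))
        (hindep T hT)
    refine ⟨selectFirst (P 0) J, isSelectionRule_selectFirst (fun l => hP l 0) hP' hJ,
      fun i e he => ?_⟩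
    cases i using Fin.cases with
    | zero => simpa using le_subsetProb_mem_selectFirst h0 h1 (hPG 0 he) he
    | succ i =>
      have hc : 0 ≤ π e * (1 - q) ^ (Nat.card ι * i) := mul_nonneg (h0 e) (pow_nonneg hq0 _)
      have hkeep : (1 - q) ^ Nat.card ι ≤ subsetProb π (P 0) fun T => e ∉ g i T :=
        (pow_le_pow_of_le_one hq0 (sub_le_self 1 ((h0 e).trans (hq e)))
          (Set.ncard_le_card _)).trans (hprob i e)
      calc π e * (1 - q) ^ (Nat.card ι * (i.succ : ℕ))
          = (1 - q) ^ Nat.card ι * (π e * (1 - q) ^ (Nat.card ι * i)) := by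
            rw [Fin.val_succ, mul_add_one, pow_add]; ring
        _ ≤ subsetProb π (P 0) (fun T => e ∉ g i T) * (π e * (1 - q) ^ (Nat.card ι * i)) :=
            mul_le_mul_of_nonneg_right hkeep hc
        _ ≤ _ := mul_le_subsetProb_mem_selectFirst h0 h1 (hPG 0) fun T hT heg =>
            hJprob T hT i e (mem_filter.2 ⟨he, heg⟩)

end Selection

theorem exists_isSelectionRule_disjointed {α ι : Type*} [DecidableEq α] [Finite ι]
    {M : ι → Matroid α} {π : α → ℝ} {q : ℝ} (h0 : ∀ e, 0 ≤ π e) (hq : ∀ e, π e ≤ q) (hq1 : q ≤ 1)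
    {n : ℕ} {G : Finset α} {Q : Fin n → Finset α} (hQG : ∀ i, Q i ⊆ G)
    (hQ : ∀ l i, (M l).Indep (Q i)) :
    ∃ I, IsSelectionRule M Q I ∧ ∀ i, ∀ e ∈ disjointed Q i,
      π e * (1 - q) ^ (Nat.card ι * i) ≤ subsetProb π G fun A => e ∈ I A := by
  obtain ⟨I, hI, hprob⟩ := exists_isSelectionRule h0 hq hq1
    (fun i => (disjointed_le Q i).trans (hQG i)) (disjoint_disjointed Q)
    fun l i => (hQ l i).subset (coe_subset.2 (disjointed_le Q i))
  exact ⟨I, ⟨fun A => (hI.subset_biUnion A).trans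
    (biUnion_mono fun i _ => disjointed_le Q i), hI.subset, hI.indep⟩, hprob⟩

/-- The Mathlib matroid with ground set `univ` and the independent sets of `M`. -/
def FinMatroid.toMatroid (M : FinMatroid E) : Matroid E :=
  (IndepMatroid.ofFinset Set.univ M.Indep M.empty_indep
    (fun _ _ hJ hIJ => M.indep_subset hJ hIJ) M.indep_exchange
    (fun _ _ => Set.subset_univ _)).matroid

theorem FinMatroid.toMatroid_indep_iff (M : FinMatroid E) (S : Finset E) :
    M.toMatroid.Indep S ↔ M.Indep S := by
  simp [FinMatroid.toMatroid]

/-- `Q` is drawn from an arbitrary finite weighted space `Ω`, independently of the random set `R`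
with marginals `π`. -/
theorem stmt_12_general {ι Ω : Type*} [Finite ι] [Fintype Ω] (M : ι → Matroid E)
    (π : E → ℝ) (h0 : ∀ e, 0 ≤ π e) (q : ℝ) (hq : ∀ e, π e ≤ q) (hq1 : q ≤ 1)
    (μ : Ω → ℝ) (hμ : ∀ ω, 0 ≤ μ ω) (τ : ℕ) (Q : Ω → Fin τ → Finset E)
    (hQ : ∀ ω i l, (M l).Indep (Q ω i)) :
    ∃ Istar : Ω → Finset E → Finset E,
      (∀ ω A, Istar ω A ⊆ univ.biUnion (Q ω) ∩ A) ∧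
      (∀ ω A l, (M l).Indep (Istar ω A)) ∧
      ∀ (e : E) (i : Fin τ), (π e * (1 - q) ^ (Nat.card ι * i)) *
          (∑ ω, μ ω * if e ∈ disjointed (Q ω) i then 1 else 0) ≤
        ∑ ω, ∑ A, μ ω * prodWeight π A *
          if e ∈ Istar ω A ∧ e ∈ disjointed (Q ω) i then 1 else 0 := by
  choose Istar hI hprob using fun ω => exists_isSelectionRule_disjointed h0 hq hq1
    (fun i => subset_univ (Q ω i)) fun l i => hQ ω i l
  refine ⟨Istar, fun ω A => subset_inter ((hI ω).subset_biUnion A) ((hI ω).subset A),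
    fun ω => (hI ω).indep, fun e i => ?_⟩
  rw [mul_sum]
  refine sum_le_sum fun ω _ => ?_
  by_cases he : e ∈ disjointed (Q ω) i
  · have hω := mul_le_mul_of_nonneg_left (hprob ω i e he) (hμ ω)
    simpa only [subsetProb_univ, mul_sum, he, and_true, if_true, mul_one, mul_comm, mul_assoc,
      mul_left_comm] using hω
  · simp [he]

/-- Existence of the augmented feasible solution `I*` for the
matroid-intersection sparsifier: `I*` is a deterministic function of the samples
`R_1, …, R_τ` (with `Q_i = OPTSOL(R_i)`) and the active set `R`, is always a common
independent set contained in `(Q_1 ∪ ⋯ ∪ Q_τ) ∩ R`, and for every element `e` and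
index `i`, conditioned on `e ∈ Q_i ∖ (Q_1 ∪ ⋯ ∪ Q_{i-1})`, the element `e` belongs to
`I*` with probability at least `p (1−p)^{k(i−1)}`.  (Here `i : Fin τ` corresponds to the
`1`-indexed sample `i + 1`, so the exponent is `k · i`.) -/
theorem stmt_12 (k : ℕ) (hk : 0 < k) (M : Fin k → FinMatroid E)
    (w : E → ℝ) (hw : ∀ e, 0 ≤ w e)
    (p : ℝ) (hp0 : 0 < p) (hp1 : p ≤ 1)
    (τ : ℕ) (hτ : 0 < τ)
    (OPTSOL : Finset E → Finset E)
    (hOmem : ∀ S, ∀ ℓ, (M ℓ).Indep (OPTSOL S))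
    (hOsub : ∀ S, OPTSOL S ⊆ S)
    (hOmax : ∀ S, ∀ T ⊆ S, (∀ ℓ, (M ℓ).Indep T) →
      setWeight w T ≤ setWeight w (OPTSOL S)) :
    ∃ Istar : (Fin τ → Finset E) → Finset E → Finset E,
      (∀ Rs A, Istar Rs A ⊆ (Finset.univ.biUnion fun i => OPTSOL (Rs i)) ∩ A) ∧
      (∀ Rs A, ∀ ℓ, (M ℓ).Indep (Istar Rs A)) ∧
      (∀ e : E, ∀ i : Fin τ,
        0 < (∑ Rs : Fin τ → Finset E, (∏ j, prodWeight (fun _ => p) (Rs j)) *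
              (if e ∈ OPTSOL (Rs i) \
                  ((Finset.univ.filter fun j => j < i).biUnion fun j => OPTSOL (Rs j))
                then 1 else 0)) →
        (p * (1 - p) ^ (k * (i : ℕ))) *
            (∑ Rs : Fin τ → Finset E, (∏ j, prodWeight (fun _ => p) (Rs j)) *
              (if e ∈ OPTSOL (Rs i) \
                  ((Finset.univ.filter fun j => j < i).biUnion fun j => OPTSOL (Rs j))
                then 1 else 0))
          ≤ ∑ Rs : Fin τ → Finset E, ∑ A : Finset E,
              ((∏ j, prodWeight (fun _ => p) (Rs j)) * prodWeight (fun _ => p) A) *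
                (if e ∈ Istar Rs A ∧ e ∈ OPTSOL (Rs i) \
                    ((Finset.univ.filter fun j => j < i).biUnion fun j => OPTSOL (Rs j))
                  then 1 else 0)) := by
  obtain ⟨Istar, hsub, hindep, hprob⟩ := stmt_12_general (fun l => (M l).toMatroid)
    (fun _ => p) (fun _ => hp0.le) p (fun _ => le_rfl) hp1
    (fun Rs : Fin τ → Finset E => ∏ j, prodWeight (fun _ => p) (Rs j))
    (fun Rs => prod_nonneg fun j _ => prodWeight_nonneg (fun _ => hp0.le) (fun _ => hp1) (Rs j)) τ
    (fun Rs i => OPTSOL (Rs i)) fun Rs i l => ((M l).toMatroid_indep_iff _).2 (hOmem (Rs i) l)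
  refine ⟨Istar, hsub, fun Rs A l => ((M l).toMatroid_indep_iff _).1 (hindep Rs A l), ?_⟩
  simpa [disjointed_apply, filter_gt_eq_Iio, sup_eq_biUnion] using fun e i _ => hprob e i
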